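/- Let k ≥ 2, t ≥ 0, and r, j be integers with 0 ≤ r ≤ 2^t − 1 and j = 2^t + r. Regard the power Δ_k^j ∈ 𝔽₂[x₁,…,x_k] as a polynomial in the single variable x_k with coefficients in 𝔽₂[x₁,…,x_{k−1}]. Then the coefficient of x_k^{2^{t+k−1}+r} in Δ_k^j equals Δ_{k−1}^{j+r}. -/

import Mathlib

/-!
Put `m = k - 1`. Separating the linear forms according to the coefficient of `x_k` gives
`Δ_k = Δ_m P(x_k)`, where `P(X) = ∏ (X + v)` over all `𝔽₂`-combinations `v` of `x₁, …, x_m`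
(`optionEquivLeft_dickson`). This `P` is monic of degree `2 ^ m`, its lowest term is `Δ_m X`, and
only exponents that are powers of two occur in it (`subspacePoly_additive`).

With `j = 2 ^ t + r`, the claim becomes that the coefficient of `X ^ (2 ^ (t + m) + r)` in
`P ^ (2 ^ t) * P ^ r` is `Δ_m ^ r`. The leading term of the first factor and the lowest term of
the second contribute exactly this. Any other contribution takes `X ^ (2 ^ t * e)` with
`e < 2 ^ m` from the first factor, hence the exponent `2 ^ t * (2 ^ m - e) + r` from `P ^ r`.
As `r < 2 ^ t`, the binary digit sum of this exponent exceeds that of `r`; but exponents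
occurring in `P ^ r` are sums of as many powers of two as `r` has binary digits `1`, so their digit
sum is at most that of `r` (`PowSupp.binSum_le`). So there is no other contribution
(`PowSupp.coeff_mul`).
-/


noncomputable section

open MvPolynomial Finset

abbrev F2 : Type := ZMod 2

/-- The linear form `ℓ_α` on a general finite variable set. -/
def linV {σ : Type} [Fintype σ] (α : σ → ZMod 2) : MvPolynomial σ F2 :=
  ∑ i, C (α i) * X i

/-- The top Dickson polynomial `Δ = ∏_{α ∈ 𝔽₂^σ ∖ {0}} ℓ_α`. -/
def dickson (σ : Type) [Fintype σ] [DecidableEq σ] : MvPolynomial σ F2 :=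
  ∏ α ∈ Finset.univ.filter (fun α : σ → ZMod 2 => α ≠ 0), linV α

/-! ### Binary digit sums -/

/-- The binary digit sum of `n`. -/
def binSum (n : ℕ) : ℕ := (Nat.digits 2 n).sum

lemma binSum_zero : binSum 0 = 0 := by simp [binSum]

lemma binSum_two_mul (n : ℕ) : binSum (2 * n) = binSum n := by
  rcases Nat.eq_zero_or_pos n with rfl | h
  · simp
  · rw [binSum, Nat.digits_def' (by norm_num) (by omega)]
    simp [binSum]

lemma binSum_two_mul_add_one (n : ℕ) : binSum (2 * n + 1) = binSum n + 1 := by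
  rw [binSum, Nat.digits_def' (by norm_num) (by omega)]
  have h1 : (2 * n + 1) % 2 = 1 := by omega
  have h2 : (2 * n + 1) / 2 = n := by omega
  rw [h1, h2, List.sum_cons, binSum, add_comm]

lemma binSum_succ_le (a : ℕ) : binSum (a + 1) ≤ binSum a + 1 := by
  induction a using Nat.strong_induction_on with
  | _ a ih =>
    rcases Nat.even_or_odd' a with ⟨b, rfl | rfl⟩
    · rw [binSum_two_mul_add_one, binSum_two_mul]
    · rw [show 2 * b + 1 + 1 = 2 * (b + 1) by ring, binSum_two_mul, binSum_two_mul_add_one]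
      have := ih b (by omega)
      omega

lemma binSum_add_two_pow_le (i a : ℕ) : binSum (a + 2 ^ i) ≤ binSum a + 1 := by
  induction i generalizing a with
  | zero => simpa using binSum_succ_le a
  | succ i ih =>
    rcases Nat.even_or_odd' a with ⟨b, rfl | rfl⟩
    · rw [show 2 * b + 2 ^ (i + 1) = 2 * (b + 2 ^ i) by ring, binSum_two_mul, binSum_two_mul]
      exact ih b
    · rw [show 2 * b + 1 + 2 ^ (i + 1) = 2 * (b + 2 ^ i) + 1 by ring, binSum_two_mul_add_one,
        binSum_two_mul_add_one]
      have := ih b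
      omega

lemma binSum_pos {n : ℕ} (hn : 0 < n) : 0 < binSum n := by
  induction n using Nat.strong_induction_on with
  | _ n ih =>
    rcases Nat.even_or_odd' n with ⟨b, rfl | rfl⟩
    · rw [binSum_two_mul]
      exact ih b (by omega) (by omega)
    · rw [binSum_two_mul_add_one]
      omega

/-- The binary expansions of `2 ^ t * q` and of `r < 2 ^ t` do not overlap. -/
lemma binSum_two_pow_mul_add (t q r : ℕ) (hr : r < 2 ^ t) :
    binSum (2 ^ t * q + r) = binSum q + binSum r := by
  induction t generalizing r with
  | zero =>
    obtain rfl : r = 0 := by simpa using hr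
    simp [binSum_zero]
  | succ t ih =>
    rw [pow_succ] at hr
    rcases Nat.even_or_odd' r with ⟨b, rfl | rfl⟩
    · rw [show 2 ^ (t + 1) * q + 2 * b = 2 * (2 ^ t * q + b) by ring, binSum_two_mul,
        binSum_two_mul, ih b (by omega)]
    · rw [show 2 ^ (t + 1) * q + (2 * b + 1) = 2 * (2 ^ t * q + b) + 1 by ring,
        binSum_two_mul_add_one, binSum_two_mul_add_one, ih b (by omega)]
      ring

/-! ### Polynomials supported on powers of two, in characteristic two -/

section Additive

variable {R : Type*} [CommRing R] [CharP R 2]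

lemma coeff_pow_two_pow (P : Polynomial R) (t e : ℕ) :
    (P ^ 2 ^ t).coeff e = if 2 ^ t ∣ e then P.coeff (e / 2 ^ t) ^ 2 ^ t else 0 := by
  rw [← Polynomial.map_iterateFrobenius_expand (p := 2), Polynomial.coeff_map,
    Polynomial.coeff_expand (by positivity)]
  split_ifs
  · simp [iterateFrobenius_def]
  · simp

lemma exists_of_coeff_pow_two_pow_ne_zero {P : Polynomial R} {t e : ℕ}
    (h : (P ^ 2 ^ t).coeff e ≠ 0) : ∃ e', e = 2 ^ t * e' ∧ P.coeff e' ≠ 0 := by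
  rw [coeff_pow_two_pow] at h
  split_ifs at h with hd
  · obtain ⟨e', rfl⟩ := hd
    refine ⟨e', rfl, fun h0 => h ?_⟩
    rw [Nat.mul_div_cancel_left _ (by positivity), h0, zero_pow (by positivity)]
  · exact absurd rfl h

lemma exists_of_coeff_sq_ne_zero {P : Polynomial R} {e : ℕ}
    (h : (P ^ 2).coeff e ≠ 0) : ∃ e', e = 2 * e' ∧ P.coeff e' ≠ 0 := by
  simpa using exists_of_coeff_pow_two_pow_ne_zero (t := 1) (by simpa using h)

/-- The polynomial `P` only involves monomials whose exponent is a power of two. -/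
def PowSupp (P : Polynomial R) : Prop := ∀ e, P.coeff e ≠ 0 → ∃ i, e = 2 ^ i

/-- Writing `r` as a sum of `binSum r` powers of two factors `P ^ r` into `binSum r` polynomials
that are again supported on powers of two, so every exponent is a sum of `binSum r` of these. -/
lemma PowSupp.binSum_le {P : Polynomial R} (hP : PowSupp P) (r e : ℕ)
    (h : (P ^ r).coeff e ≠ 0) : binSum e ≤ binSum r := by
  induction r using Nat.strong_induction_on generalizing e with
  | _ r ih =>
    rcases Nat.even_or_odd' r with ⟨b, rfl | rfl⟩
    · rcases Nat.eq_zero_or_pos b with rfl | hb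
      · obtain rfl : e = 0 := by
          by_contra h0
          simp [Polynomial.coeff_one, h0] at h
        simp
      · rw [mul_comm, pow_mul] at h
        obtain ⟨e', rfl, h'⟩ := exists_of_coeff_sq_ne_zero h
        rw [binSum_two_mul, binSum_two_mul]
        exact ih b (by omega) e' h'
    · rw [pow_succ, mul_comm 2 b, pow_mul, Polynomial.coeff_mul] at h
      obtain ⟨⟨a, c⟩, hac, hne⟩ := Finset.exists_ne_zero_of_sum_ne_zero h
      obtain rfl := Finset.HasAntidiagonal.mem_antidiagonal.mp hac
      obtain ⟨e', rfl, h'⟩ := exists_of_coeff_sq_ne_zero (left_ne_zero_of_mul hne)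
      obtain ⟨i, rfl⟩ := hP c (right_ne_zero_of_mul hne)
      have h1 := binSum_add_two_pow_le i (2 * e')
      have h2 := ih b (by omega) e' h'
      dsimp only
      rw [binSum_two_mul_add_one]
      rw [binSum_two_mul] at h1
      omega

/-- The key coefficient extraction: only the product of the leading term of `P ^ 2 ^ t` and the
lowest term of `P ^ r` contributes to the exponent `2 ^ (t + m) + r`. -/
lemma PowSupp.coeff_mul {P : Polynomial R} (hP : PowSupp P) {m : ℕ}
    (hdeg : P.natDegree ≤ 2 ^ m) (hlead : P.coeff (2 ^ m) = 1) {t r : ℕ} (hr : r < 2 ^ t) :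
    (P ^ 2 ^ t * P ^ r).coeff (2 ^ (t + m) + r) = (P ^ r).coeff r := by
  rw [Polynomial.coeff_mul, Finset.sum_eq_single (2 ^ (t + m), r)]
  · rw [coeff_pow_two_pow, pow_add, if_pos (Dvd.intro _ rfl),
      Nat.mul_div_cancel_left _ (by positivity), hlead, one_pow, one_mul]
  · rintro ⟨a, b⟩ hab hne
    by_contra h
    obtain ⟨e', rfl, he'⟩ := exists_of_coeff_pow_two_pow_ne_zero (left_ne_zero_of_mul h)
    have hb := hP.binSum_le r b (right_ne_zero_of_mul h)
    have hle : e' ≤ 2 ^ m := (Polynomial.le_natDegree_of_ne_zero he').trans hdeg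
    have hab' : 2 ^ t * e' + b = 2 ^ (t + m) + r := Finset.HasAntidiagonal.mem_antidiagonal.mp hab
    rcases hle.eq_or_lt with rfl | hlt
    · rw [← pow_add] at hab' hne
      exact hne (by rw [Nat.add_left_cancel hab'])
    · obtain ⟨d, hd⟩ := Nat.exists_eq_add_of_lt hlt
      -- A smaller exponent on the left leaves a nonzero multiple of `2 ^ t` for `b`, which
      -- has then strictly more binary digits `1` than `r`.
      have hbd : b = 2 ^ t * (d + 1) + r := by
        rw [pow_add, hd] at hab'
        have : 2 ^ t * (e' + d + 1) = 2 ^ t * e' + 2 ^ t * (d + 1) := by ring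
        omega
      rw [hbd, binSum_two_pow_mul_add t _ r hr] at hb
      have := binSum_pos (Nat.succ_pos d)
      simp only [Nat.succ_eq_add_one] at this
      omega
  · intro h
    exact absurd (by simp) h

end Additive

/-! ### The product over a subspace -/

section Subspace

variable {R : Type*} [CommRing R] [Algebra (ZMod 2) R]

/-- The polynomial `∏ (X + v)`, with `v` running over the `𝔽₂`-combinations (with multiplicity)
of `w₀, …, w_{n-1}`. -/
def subspacePoly {n : ℕ} (w : Fin n → R) : Polynomial R :=
  ∏ α : Fin n → ZMod 2, (Polynomial.X + Polynomial.C (∑ i, algebraMap (ZMod 2) R (α i) * w i))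

lemma subspacePoly_succ {n : ℕ} (w : Fin (n + 1) → R) :
    subspacePoly w = subspacePoly (Fin.tail w) *
      (subspacePoly (Fin.tail w)).comp (Polynomial.X + Polynomial.C (w 0)) := by
  have h : ∀ f : ZMod 2 → Polynomial R, ∏ a, f a = f 0 * f 1 := fun f => Fin.prod_univ_two f
  unfold subspacePoly
  rw [← (Fin.consEquiv (fun _ => ZMod 2)).prod_comp, Fintype.prod_prod_type, h,
    Polynomial.prod_comp]
  congr 1
  · refine Finset.prod_congr rfl fun β _ => ?_
    simp [Fin.consEquiv, Fin.sum_univ_succ, Fin.tail]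
  · refine Finset.prod_congr rfl fun β _ => ?_
    simp [Fin.consEquiv, Fin.sum_univ_succ, Fin.tail, add_assoc]

/-- Adjoining a vector `w` to a subspace with polynomial `P` gives `P ^ 2 + P(w) P`, which stays
additive and supported on powers of two. -/
lemma subspacePoly_additive [CharP R 2] {n : ℕ} (w : Fin n → R) :
    PowSupp (subspacePoly w) ∧ ∀ c, (subspacePoly w).comp (Polynomial.X + Polynomial.C c) =
      subspacePoly w + Polynomial.C ((subspacePoly w).eval c) := by
  induction n with
  | zero =>
    have h : subspacePoly w = Polynomial.X := by simp [subspacePoly]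
    rw [h]
    refine ⟨fun e he => ⟨0, ?_⟩, fun c => by simp⟩
    by_contra h0
    exact he (Polynomial.coeff_X_of_ne_one (by simpa using h0))
  | succ n ih =>
    obtain ⟨hS, hA⟩ := ih (Fin.tail w)
    rw [subspacePoly_succ, hA]
    set P := subspacePoly (Fin.tail w)
    set a := P.eval (w 0)
    have hQ : P * (P + Polynomial.C a) = P ^ 2 + Polynomial.C a * P := by ring
    rw [hQ]
    refine ⟨fun e he => ?_, fun c => ?_⟩
    · by_cases h2 : (P ^ 2).coeff e = 0
      · rw [Polynomial.coeff_add, h2, zero_add, Polynomial.coeff_C_mul] at he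
        exact hS e (right_ne_zero_of_mul he)
      · obtain ⟨e', rfl, h'⟩ := exists_of_coeff_sq_ne_zero h2
        obtain ⟨i, rfl⟩ := hS e' h'
        exact ⟨i + 1, by ring⟩
    · simp only [Polynomial.add_comp, Polynomial.mul_comp, Polynomial.pow_comp, hA,
        Polynomial.C_comp, Polynomial.eval_add, Polynomial.eval_pow, Polynomial.eval_mul,
        Polynomial.eval_C, Polynomial.C_add, Polynomial.C_mul, Polynomial.C_pow, CharTwo.add_sq]
      ring

lemma subspacePoly_monic {n : ℕ} (w : Fin n → R) : (subspacePoly w).Monic :=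
  Polynomial.monic_prod_of_monic _ _ fun _ _ => Polynomial.monic_X_add_C _

lemma subspacePoly_natDegree [Nontrivial R] {n : ℕ} (w : Fin n → R) :
    (subspacePoly w).natDegree = 2 ^ n := by
  rw [subspacePoly, Polynomial.natDegree_prod_of_monic _ _ fun _ _ => Polynomial.monic_X_add_C _]
  simp only [Polynomial.natDegree_X_add_C]
  simp [ZMod.card]

/-- The lowest term of `∏ (X + v) = X ∏_{v ≠ 0} (X + v)`, raised to the power `r`. -/
lemma subspacePoly_pow_coeff {n : ℕ} (w : Fin n → R) (r : ℕ) :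
    (subspacePoly w ^ r).coeff r =
      (∏ α : Fin n → ZMod 2 with α ≠ 0, ∑ i, algebraMap (ZMod 2) R (α i) * w i) ^ r := by
  have h : subspacePoly w = Polynomial.X * ∏ α : Fin n → ZMod 2 with α ≠ 0,
      (Polynomial.X + Polynomial.C (∑ i, algebraMap (ZMod 2) R (α i) * w i)) := by
    rw [subspacePoly, ← Finset.mul_prod_erase _ _ (Finset.mem_univ 0), Finset.filter_ne']
    simp
  rw [h, mul_pow, Polynomial.coeff_X_pow_mul', if_pos le_rfl, Nat.sub_self,
    Polynomial.coeff_zero_eq_eval_zero, Polynomial.eval_pow, Polynomial.eval_prod]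
  simp only [Polynomial.eval_add, Polynomial.eval_X, Polynomial.eval_C, zero_add]

end Subspace

/-! ### Dickson polynomials -/

/-- The forms not involving `none` give `dickson (Fin m)`; those involving it are `X + v`. -/
lemma optionEquivLeft_dickson (m : ℕ) :
    optionEquivLeft F2 (Fin m) (dickson (Option (Fin m))) =
      Polynomial.C (dickson (Fin m)) *
        subspacePoly (X : Fin m → MvPolynomial (Fin m) F2) := by
  have h : ∀ f : ZMod 2 → Polynomial (MvPolynomial (Fin m) F2), ∏ a, f a = f 0 * f 1 :=
    fun f => Fin.prod_univ_two f
  unfold dickson subspacePoly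
  rw [Finset.prod_filter, Finset.prod_filter, map_prod, map_prod,
    ← (Equiv.piOptionEquivProd (β := fun _ : Option (Fin m) => ZMod 2)).symm.prod_comp,
    Fintype.prod_prod_type, h]
  have key : ∀ (a : ZMod 2) (β : Fin m → ZMod 2),
      optionEquivLeft F2 (Fin m) (linV ((Equiv.piOptionEquivProd
        (β := fun _ : Option (Fin m) => ZMod 2)).symm (a, β))) =
      Polynomial.C (C a) * Polynomial.X + Polynomial.C (linV β) := by
    intro a β
    simp [linV, Fintype.sum_option, optionEquivLeft_X_none, optionEquivLeft_X_some,
      optionEquivLeft_C, Equiv.piOptionEquivProd]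
  have hz : ∀ (a : ZMod 2) (β : Fin m → ZMod 2),
      (Equiv.piOptionEquivProd (β := fun _ : Option (Fin m) => ZMod 2)).symm (a, β) = 0 ↔
        a = 0 ∧ β = 0 := by
    intro a β
    rw [Equiv.symm_apply_eq]
    exact Prod.ext_iff
  congr 1
  · refine Finset.prod_congr rfl fun β _ => ?_
    by_cases hβ : β = 0 <;> simp [hz, hβ, key]
  · refine Finset.prod_congr rfl fun β _ => ?_
    rw [if_pos (by rw [Ne, hz]; simp), key]
    simp [linV, MvPolynomial.algebraMap_eq]

/-- For `k ≥ 2`, `j = 2^t + r` with `0 ≤ r ≤ 2^t - 1`: viewing `Δ_k^j` (with `x_k` the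
variable `none`) as a polynomial in `x_k` over `𝔽₂[x₁,…,x_{k-1}]`, the coefficient of
`x_k^{2^{t+k-1}+r}` equals `Δ_{k-1}^{j+r}`. -/
theorem dickson_pow_coeff (k t r j : ℕ) (hk : 2 ≤ k) (hr : r ≤ 2 ^ t - 1)
    (hj : j = 2 ^ t + r) :
    (MvPolynomial.optionEquivLeft F2 (Fin (k - 1))
          (dickson (Option (Fin (k - 1))) ^ j)).coeff (2 ^ (t + k - 1) + r) =
      dickson (Fin (k - 1)) ^ (j + r) := by
  obtain ⟨m, rfl⟩ : ∃ m, k = m + 1 := ⟨k - 1, by omega⟩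
  subst hj
  have hr' : r < 2 ^ t := by
    have := Nat.two_pow_pos t
    omega
  change (optionEquivLeft F2 (Fin m) (dickson (Option (Fin m)) ^ (2 ^ t + r))).coeff
    (2 ^ (t + m) + r) = dickson (Fin m) ^ (2 ^ t + r + r)
  rw [map_pow, optionEquivLeft_dickson, mul_pow, ← Polynomial.C_pow, Polynomial.coeff_C_mul,
    pow_add (subspacePoly _), (subspacePoly_additive _).1.coeff_mul
      (subspacePoly_natDegree _).le ?_ hr', subspacePoly_pow_coeff, pow_add _ (2 ^ t + r)]
  · rfl
  · have := (subspacePoly_monic (X : Fin m → MvPolynomial (Fin m) F2)).coeff_natDegree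
    rwa [subspacePoly_natDegree] at this
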